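/- arXiv:2110.04059 — 3 statements merged into one kernel-verified Lean document; each statement's English description precedes it below -/
import Mathlib

section
/- Let I ⊆ ℝ be an open interval, p, q₀, r₀ : I → ℝ smooth, T₀ y = p·y'' + q₀·y' + r₀·y, and let φ₁, …, φₙ : I → ℝ be smooth with T₀φⱼ = λⱼφⱼ for pairwise distinct constants λ₁, …, λₙ. For 1 ≤ k ≤ n let Wₖ(z) = det[(d/dz)^{j-1}φᵢ(z)]_{1≤i,j≤k} be the Wronskian of φ₁, …, φₖ, assumed nonvanishing on I, and set υₖ = Wₖ'/Wₖ (with υ₀ = 0), w̃ₖ = υₖ - υ_{k-1}, and Ãₖ y = y' - w̃ₖ·y. Then for all 2 ≤ k ≤ j ≤ n, the composition (Ã_{k-1} ∘ Ã_{k-2} ∘ ⋯ ∘ Ã₁)φⱼ equals the quotient of Wronskians W(φ₁, …, φ_{k-1}, φⱼ) / W(φ₁, …, φ_{k-1}) on I. -/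
open Set

/-- Wronskian of the functions `φ 1, …, φ k`. -/
noncomputable def wronskian (φ : ℕ → ℝ → ℝ) (k : ℕ) (z : ℝ) : ℝ :=
  (Matrix.of fun i j : Fin k => iteratedDeriv (j : ℕ) (φ (i.1 + 1)) z).det

/-- Wronskian of `φ 1, …, φ k, φ j` (a `(k+1) × (k+1)` determinant). -/
noncomputable def wronskianWith (φ : ℕ → ℝ → ℝ) (k j : ℕ) (z : ℝ) : ℝ :=
  (Matrix.of fun i c : Fin (k + 1) =>
    iteratedDeriv (c : ℕ) (if i.1 < k then φ (i.1 + 1) else φ j) z).det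

/-- `υ k = Wₖ'/Wₖ` (with `υ 0 = 0`, as `W₀ ≡ 1`). -/
noncomputable def upsGauge (φ : ℕ → ℝ → ℝ) (k : ℕ) (z : ℝ) : ℝ :=
  deriv (wronskian φ k) z / wronskian φ k z

/-- `chain φ j k = (Ãₖ ∘ ⋯ ∘ Ã₁) φⱼ`, where `Ãₘ y = y' - (υₘ - υ_{m-1}) y`. -/
noncomputable def chainA (φ : ℕ → ℝ → ℝ) (j : ℕ) : ℕ → ℝ → ℝ
  | 0 => φ j
  | k + 1 => fun z =>
      deriv (chainA φ j k) z - (upsGauge φ (k + 1) z - upsGauge φ k z) * chainA φ j k z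

/-!
The derivative of a Wronskian only raises the order of its last column, so `W(y, f)`, `W(y, g)` and
their derivatives are the four minors of `W(y, f, g)` that border `W(y)`, and Desnanot–Jacobi reads
`W(y) W(y, f, g) = W(y, f) W(y, g)' - W(y, f)' W(y, g)`. Dividing by `W(y) W(y, f)`, the operator
`h ↦ h' - (W(y, f)' / W(y, f) - W(y)' / W(y)) h` sends `W(y, g) / W(y)` to `W(y, f, g) / W(y, f)`:
each factor of the chain adds one function to both Wronskians.
-/

lemma append_comp_val {α : Type*} (f : ℕ → α) (k l : ℕ) :
    Fin.append (fun i : Fin k => f i) (fun i : Fin l => f (k + i)) =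
      fun i : Fin (k + l) => f i :=
  Fin.append_castAdd_natAdd (f := fun i => f i)

lemma append_singleton_comp_val {α : Type*} (f : ℕ → α) (k : ℕ) :
    Fin.append (fun i : Fin k => f i) ![f k] = fun i : Fin (k + 1) => f i := by
  simpa [Matrix.vec_single_eq_const] using append_comp_val f k 1

section Determinant

open Matrix

/-- **Sylvester's determinant identity** for the minors bordering the invertible block `A` by one
row and one column; **Desnanot–Jacobi** is the case of a two-element `n`. -/
lemma det_of_bordered_minors {m n R : Type*} [Fintype m] [DecidableEq m] [Fintype n]
    [DecidableEq n] [Nonempty n] [CommRing R] {A : Matrix m m R} (hA : IsUnit A.det)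
    (B : Matrix m n R) (C : Matrix n m R) (D : Matrix n n R) :
    (of fun i j => ((fromBlocks A B C D).submatrix
      (Sum.map id fun _ : Fin 1 => i) (Sum.map id fun _ : Fin 1 => j)).det).det =
      A.det ^ (Fintype.card n - 1) * (fromBlocks A B C D).det := by
  have := A.invertibleOfIsUnitDet hA
  have minors_eq : (of fun i j => ((fromBlocks A B C D).submatrix
      (Sum.map id fun _ : Fin 1 => i) (Sum.map id fun _ : Fin 1 => j)).det) =
      A.det • (D - C * ⅟A * B) := by
    ext i j
    rw [of_apply, ← fromBlocks_toBlocks (submatrix _ _ _)]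
    change (fromBlocks A _ _ _).det = _
    rw [det_fromBlocks₁₁, det_fin_one]
    rfl
  rw [minors_eq, det_smul, det_fromBlocks₁₁, ← mul_assoc, pow_sub_one_mul Fintype.card_ne_zero]

lemma hasDerivAt_det {n 𝕜 R : Type*} [Fintype n] [DecidableEq n] [NontriviallyNormedField 𝕜]
    [NormedCommRing R] [NormedAlgebra 𝕜 R] {M : 𝕜 → Matrix n n R} {M' : Matrix n n R} {z : 𝕜}
    (hM : ∀ i j, HasDerivAt (fun x => M x i j) (M' i j) z) :
    HasDerivAt (fun x => (M x).det) (∑ j, ((M z).updateCol j (M'.col j)).det) z := by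
  simp only [det_apply']
  rw [Finset.sum_comm]
  refine HasDerivAt.fun_sum fun σ _ => ?_
  rw [← Finset.mul_sum]
  refine ((HasDerivAt.fun_finsetProd fun i _ => hM (σ i) i).const_mul _).congr_deriv ?_
  congr 1
  refine Finset.sum_congr rfl fun j _ => ?_
  rw [← Finset.prod_erase_mul _ _ (Finset.mem_univ j), updateCol_self, smul_eq_mul, col_apply]
  congr 1
  exact Finset.prod_congr rfl fun i hi => (updateCol_ne (Finset.ne_of_mem_erase hi)).symm

end Determinant

section Wronskian

lemma hasDerivAt_iteratedDeriv {𝕜 E : Type*} [NontriviallyNormedField 𝕜] [NormedAddCommGroup E]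
    [NormedSpace 𝕜 E] {f : 𝕜 → E} {m k : ℕ} {z : 𝕜} (hf : ContDiffAt 𝕜 k f z)
    (hmk : m < k) : HasDerivAt (iteratedDeriv m f) (iteratedDeriv (m + 1) f z) z := by
  rw [iteratedDeriv_succ]
  have := hf.contDiffWithinAt (s := Set.univ) |>.differentiableWithinAt_iteratedDerivWithin
    (m := m) (mod_cast hmk) (by simp [uniqueDiffOn_univ])
  rw [iteratedDerivWithin_univ, differentiableWithinAt_univ] at this
  exact this.hasDerivAt

variable {𝕜 F : Type*} [NontriviallyNormedField 𝕜] [NontriviallyNormedField F] [NormedAlgebra 𝕜 F]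

/-- The matrix of the derivatives of the functions `y i` of the orders `d j`: a Wronskian matrix
with arbitrary orders in its columns, so that derivatives of Wronskians are determinants of the same
form. Functions index the rows. -/
noncomputable def derivMatrix {m n : Type*} (d : n → ℕ) (y : m → 𝕜 → F) (z : 𝕜) : Matrix m n F :=
  Matrix.of fun i j => iteratedDeriv (d j) (y i) z

/-- The Wronskian `W(y₀, …, yₖ₋₁)` of a finite family, the common form of `wronskian` and
`wronskianWith`. -/
noncomputable def familyWronskian {k : ℕ} (y : Fin k → 𝕜 → F) (z : 𝕜) : F :=
  (derivMatrix Fin.val y z).det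

lemma hasDerivAt_det_derivMatrix {n : Type*} [Fintype n] [DecidableEq n] {d : n → ℕ}
    {y : n → 𝕜 → F} {z : 𝕜} {k : ℕ} (hd : ∀ j, d j < k) (hy : ∀ i, ContDiffAt 𝕜 k (y i) z) :
    HasDerivAt (fun x => (derivMatrix d y x).det)
      (∑ j, (derivMatrix (Function.update d j (d j + 1)) y z).det) z := by
  refine (hasDerivAt_det (M := derivMatrix d y) (M' := derivMatrix (fun j => d j + 1) y z)
    fun i j => hasDerivAt_iteratedDeriv (hy i) (hd j)).congr_deriv ?_
  refine Finset.sum_congr rfl fun j _ => congrArg Matrix.det ?_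
  ext i c
  rcases eq_or_ne c j with rfl | hc
  · simp [derivMatrix]
  · simp [derivMatrix, hc]

lemma differentiableAt_familyWronskian {k : ℕ} {y : Fin k → 𝕜 → F} {z : 𝕜}
    (hy : ∀ i, ContDiffAt 𝕜 k (y i) z) : DifferentiableAt 𝕜 (familyWronskian y) z :=
  (hasDerivAt_det_derivMatrix Fin.is_lt hy).differentiableAt

lemma det_derivMatrix_append {k l : ℕ} (d : Fin k → ℕ) (e : Fin l → ℕ) (y : Fin k → 𝕜 → F)
    (g : Fin l → 𝕜 → F) (z : 𝕜) :
    (derivMatrix (Fin.append d e) (Fin.append y g) z).det =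
      (derivMatrix (Sum.elim d e) (Sum.elim y g) z).det := by
  rw [← Fin.append_comp_sumElim (xs := d), ← Fin.append_comp_sumElim (xs := y)]
  exact (Matrix.det_submatrix_equiv_self finSumFinEquiv _).symm

lemma det_bordered_derivMatrix {k l : ℕ} [NeZero l] {d : Fin k → ℕ} {y : Fin k → 𝕜 → F} {z : 𝕜}
    (h : (derivMatrix d y z).det ≠ 0) (e : Fin l → ℕ) (g : Fin l → 𝕜 → F) :
    (Matrix.of fun i j =>
      (derivMatrix (Fin.append d ![e j]) (Fin.append y ![g i]) z).det).det =
      (derivMatrix d y z).det ^ (l - 1) *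
        (derivMatrix (Fin.append d e) (Fin.append y g) z).det := by
  have blocks : derivMatrix (Sum.elim d e) (Sum.elim y g) z = Matrix.fromBlocks
      (derivMatrix d y z) (derivMatrix e y z) (derivMatrix d g z) (derivMatrix e g z) := by
    ext (i | i) (j | j) <;> rfl
  have sylvester := det_of_bordered_minors h.isUnit
    (derivMatrix e y z) (derivMatrix d g z) (derivMatrix e g z)
  rw [← blocks, Fintype.card_fin] at sylvester
  rw [det_derivMatrix_append, ← sylvester]
  congr! 4 with i j
  rw [det_derivMatrix_append]
  congr 1
  ext (i | i) (j | j) <;> simp [derivMatrix]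

lemma hasDerivAt_familyWronskian_append_singleton {k : ℕ} {y : Fin k → 𝕜 → F} {f : 𝕜 → F} {z : 𝕜}
    (hy : ∀ i, ContDiffAt 𝕜 (k + 1) (y i) z) (hf : ContDiffAt 𝕜 (k + 1) f z) :
    HasDerivAt (familyWronskian (Fin.append y ![f]))
      (derivMatrix (Fin.append Fin.val ![k + 1]) (Fin.append y ![f]) z).det z := by
  have hyf (i) : ContDiffAt 𝕜 (k + 1 : ℕ) (Fin.append y ![f] i) z := by
    cases i using Fin.addCases <;> simp [hy, hf]
  refine (hasDerivAt_det_derivMatrix Fin.is_lt hyf).congr_deriv ?_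
  rw [Fin.sum_univ_castSucc, Finset.sum_eq_zero, zero_add]
  · have update_last : Function.update Fin.val (Fin.last k) (Fin.last k + 1) =
        Fin.append Fin.val ![k + 1] := by
      ext c
      cases c using Fin.lastCases <;> simp [Fin.append_right_eq_snoc]
    rw [update_last]
  · intro c _
    -- The raised column `c` coincides with column `c + 1`.
    refine Matrix.det_zero_of_column_eq (Fin.castSucc_lt_succ (i := c)).ne fun i => ?_
    simp [derivMatrix, (Fin.castSucc_lt_succ (i := c)).ne']

lemma familyWronskian_append_pair_mul {k : ℕ} {y : Fin k → 𝕜 → F} {f g : 𝕜 → F} {z : 𝕜}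
    (hy : ∀ i, ContDiffAt 𝕜 (k + 1) (y i) z) (hf : ContDiffAt 𝕜 (k + 1) f z)
    (hg : ContDiffAt 𝕜 (k + 1) g z) (hW : familyWronskian y z ≠ 0) :
    familyWronskian y z * familyWronskian (Fin.append y ![f, g]) z =
      familyWronskian (Fin.append y ![f]) z * deriv (familyWronskian (Fin.append y ![g])) z -
        deriv (familyWronskian (Fin.append y ![f])) z * familyWronskian (Fin.append y ![g]) z := by
  have jacobi := det_bordered_derivMatrix hW (fun j : Fin 2 => k + j) ![f, g]
  have append_val_singleton : Fin.append Fin.val ![k] = (Fin.val : Fin (k + 1) → ℕ) :=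
    append_singleton_comp_val id k
  have append_val_pair : Fin.append Fin.val (fun j : Fin 2 => k + j) =
      (Fin.val : Fin (k + 2) → ℕ) :=
    append_comp_val id k 2
  rw [append_val_pair, Matrix.det_fin_two] at jacobi
  simp only [Matrix.of_apply, Matrix.cons_val_zero, Matrix.cons_val_one, Fin.val_zero,
    Fin.val_one, add_zero, append_val_singleton, Nat.add_one_sub_one, pow_one] at jacobi
  rw [(hasDerivAt_familyWronskian_append_singleton hy hf).deriv,
    (hasDerivAt_familyWronskian_append_singleton hy hg).deriv]
  simp only [familyWronskian]
  linear_combination -jacobi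

lemma deriv_div_sub_logDeriv_sub_mul {u v w : 𝕜 → F} {z : 𝕜} (hu : DifferentiableAt 𝕜 u z)
    (hw : DifferentiableAt 𝕜 w z) (hv₀ : v z ≠ 0) (hw₀ : w z ≠ 0) :
    deriv (u / w) z - (logDeriv v z - logDeriv w z) * (u / w) z =
      (v z * deriv u z - deriv v z * u z) / (w z * v z) := by
  rw [deriv_div hu hw hw₀, logDeriv_apply, logDeriv_apply, Pi.div_apply]
  field_simp
  ring

lemma deriv_familyWronskian_div_sub_mul {k : ℕ} {y : Fin k → 𝕜 → F} {f g : 𝕜 → F} {z : 𝕜}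
    (hy : ∀ i, ContDiffAt 𝕜 (k + 1) (y i) z) (hf : ContDiffAt 𝕜 (k + 1) f z)
    (hg : ContDiffAt 𝕜 (k + 1) g z) (hW : familyWronskian y z ≠ 0)
    (hWf : familyWronskian (Fin.append y ![f]) z ≠ 0) :
    deriv (familyWronskian (Fin.append y ![g]) / familyWronskian y) z -
        (logDeriv (familyWronskian (Fin.append y ![f])) z - logDeriv (familyWronskian y) z) *
          (familyWronskian (Fin.append y ![g]) / familyWronskian y) z =
      (familyWronskian (Fin.append y ![f, g]) / familyWronskian (Fin.append y ![f])) z := by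
  rw [deriv_div_sub_logDeriv_sub_mul
      (hasDerivAt_familyWronskian_append_singleton hy hg).differentiableAt
      (differentiableAt_familyWronskian fun i => (hy i).of_le (by simp)) hWf hW,
    ← familyWronskian_append_pair_mul hy hf hg hW, Pi.div_apply, mul_div_mul_left _ _ hW]

end Wronskian

section Chain

variable (φ : ℕ → ℝ → ℝ)

lemma wronskian_eq_familyWronskian (k : ℕ) :
    wronskian φ k = familyWronskian fun i : Fin k => φ (i + 1) :=
  rfl

lemma wronskianWith_eq_familyWronskian (k j : ℕ) :
    wronskianWith φ k j = familyWronskian (Fin.append (fun i : Fin k => φ (i + 1)) ![φ j]) := by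
  funext z
  refine congrArg Matrix.det ?_
  ext i c
  cases i using Fin.addCases <;> simp [derivMatrix]

lemma wronskian_succ_eq_familyWronskian (k : ℕ) :
    wronskian φ (k + 1) =
      familyWronskian (Fin.append (fun i : Fin k => φ (i + 1)) ![φ (k + 1)]) := by
  rw [wronskian_eq_familyWronskian, append_singleton_comp_val fun i => φ (i + 1)]

lemma wronskianWith_succ_eq_familyWronskian (k j : ℕ) :
    wronskianWith φ (k + 1) j =
      familyWronskian (Fin.append (fun i : Fin k => φ (i + 1)) ![φ (k + 1), φ j]) := by
  have pair_eq_snoc : ![φ (k + 1), φ j] = Fin.snoc ![φ (k + 1)] (φ j) := by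
    ext i : 1
    fin_cases i <;> rfl
  rw [wronskianWith_eq_familyWronskian, pair_eq_snoc, Fin.append_snoc,
    append_singleton_comp_val fun i => φ (i + 1), Fin.append_right_eq_snoc]
  rfl

lemma upsGauge_eq_logDeriv (k : ℕ) : upsGauge φ k = logDeriv (wronskian φ k) :=
  rfl

lemma wronskian_zero : wronskian φ 0 = 1 := by
  funext z
  exact Matrix.det_isEmpty

variable {φ} {s : Set ℝ} {j k : ℕ}

lemma chainA_succ_eqOn (hs : IsOpen s)
    (hφ : ∀ i ∈ Finset.Icc 1 (k + 1), ContDiffOn ℝ (k + 1) (φ i) s)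
    (hj : ContDiffOn ℝ (k + 1) (φ j) s) (hW : ∀ z ∈ s, wronskian φ k z ≠ 0)
    (hW' : ∀ z ∈ s, wronskian φ (k + 1) z ≠ 0)
    (hchain : EqOn (chainA φ j k) (wronskianWith φ k j / wronskian φ k) s) :
    EqOn (chainA φ j (k + 1)) (wronskianWith φ (k + 1) j / wronskian φ (k + 1)) s := by
  intro z hz
  have smoothAt {f : ℝ → ℝ} (hf : ContDiffOn ℝ (k + 1) f s) : ContDiffAt ℝ (k + 1) f z :=
    hf.contDiffAt (hs.mem_nhds hz)
  have hφz (i : ℕ) (hi : i ≤ k) : ContDiffAt ℝ (k + 1) (φ (i + 1)) z :=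
    smoothAt (hφ _ (Finset.mem_Icc.2 (by lia)))
  simp only [chainA, upsGauge_eq_logDeriv]
  rw [(hchain.eventuallyEq_of_mem (hs.mem_nhds hz)).deriv_eq, hchain hz,
    wronskianWith_succ_eq_familyWronskian, wronskian_succ_eq_familyWronskian,
    wronskianWith_eq_familyWronskian, wronskian_eq_familyWronskian]
  exact deriv_familyWronskian_div_sub_mul (fun i => hφz i i.is_lt.le) (hφz k le_rfl)
    (smoothAt hj) (hW z hz) (wronskian_succ_eq_familyWronskian φ k ▸ hW' z hz)

end Chain

theorem statement3_general {φ : ℕ → ℝ → ℝ} {s : Set ℝ} (hs : IsOpen s) {j k : ℕ}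
    (hφ : ∀ i ∈ Finset.Icc 1 k, ContDiffOn ℝ k (φ i) s) (hj : ContDiffOn ℝ k (φ j) s)
    (hW : ∀ i ∈ Finset.Icc 1 k, ∀ z ∈ s, wronskian φ i z ≠ 0) :
    EqOn (chainA φ j k) (wronskianWith φ k j / wronskian φ k) s := by
  induction k with
  | zero => simp [wronskian_zero, wronskianWith, chainA, EqOn]
  | succ k ih =>
    have mem_Icc {i : ℕ} (hi : i ∈ Finset.Icc 1 k) : i ∈ Finset.Icc 1 (k + 1) :=
      Finset.Icc_subset_Icc_right k.le_succ hi
    have hWk : ∀ z ∈ s, wronskian φ k z ≠ 0 := by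
      rcases k.eq_zero_or_pos with rfl | hk
      · simp [wronskian_zero]
      · exact hW k (Finset.mem_Icc.2 ⟨hk, k.le_succ⟩)
    push_cast at hφ hj
    exact chainA_succ_eqOn hs hφ hj hWk (hW (k + 1) (by simp))
      (ih (fun i hi => (hφ i (mem_Icc hi)).of_le (by simp)) (hj.of_le (by simp))
        fun i hi => hW i (mem_Icc hi))

/-- for `2 ≤ k ≤ j ≤ n`,
`(Ã_{k-1} ∘ ⋯ ∘ Ã₁)φⱼ = W(φ₁,…,φ_{k-1},φⱼ)/W(φ₁,…,φ_{k-1})`. -/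
theorem statement3 (n : ℕ) (a b : ℝ) (hab : a < b)
    (p q₀ r₀ : ℝ → ℝ) (φ : ℕ → ℝ → ℝ) (lam : ℕ → ℝ)
    (hp : ContDiffOn ℝ (⊤ : ℕ∞) p (Ioo a b)) (hq₀ : ContDiffOn ℝ (⊤ : ℕ∞) q₀ (Ioo a b))
    (hr₀ : ContDiffOn ℝ (⊤ : ℕ∞) r₀ (Ioo a b))
    (hφ : ∀ j ∈ Finset.Icc 1 n, ContDiffOn ℝ (⊤ : ℕ∞) (φ j) (Ioo a b))
    (heig : ∀ j ∈ Finset.Icc 1 n, ∀ z ∈ Ioo a b,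
      p z * deriv (deriv (φ j)) z + q₀ z * deriv (φ j) z + r₀ z * φ j z = lam j * φ j z)
    (hdist : ∀ j ∈ Finset.Icc 1 n, ∀ k ∈ Finset.Icc 1 n, j ≠ k → lam j ≠ lam k)
    (hW : ∀ k ∈ Finset.Icc 1 n, ∀ z ∈ Ioo a b, wronskian φ k z ≠ 0) :
    ∀ k j : ℕ, 2 ≤ k → k ≤ j → j ≤ n → ∀ z ∈ Ioo a b,
      chainA φ j (k - 1) z = wronskianWith φ (k - 1) j z / wronskian φ (k - 1) z := by
  intro k j hk hkj hjn
  have hIcc : Finset.Icc 1 (k - 1) ⊆ Finset.Icc 1 n := Finset.Icc_subset_Icc_right (by lia)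
  exact statement3_general isOpen_Ioo (fun i hi => contDiffOn_infty.1 (hφ i (hIcc hi)) _)
    (contDiffOn_infty.1 (hφ j (Finset.mem_Icc.2 (by lia))) _) fun i hi => hW i (hIcc hi)
end

section
/- Let I ⊆ ℝ be an open interval, q₀, r₀ : I → ℝ smooth, p, φ, μ : I → ℝ smooth and nonvanishing, and λ ∈ ℝ. Suppose p·φ'' + q₀·φ' + r₀·φ = λ·φ on I and μ'/μ = -q₀/p on I. Let ρ, g : I → ℝ be differentiable with ρ' = φ²/(p·μ) and g' = μ·ρ/φ² on I, and set φ⁽¹⁾ = φ·g. Then φ⁽¹⁾ is smooth and satisfies p·(φ⁽¹⁾)'' + q₀·(φ⁽¹⁾)' + r₀·φ⁽¹⁾ = λ·φ⁽¹⁾ + φ on I; that is, φ⁽¹⁾ is a particular solution of the inhomogeneous equation (T₀ - λ)y = φ. -/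
open Set

/-!
Reduction of order: `φ · (T₀ (φ g) - g · T₀ φ) = p w' + q₀ w` for `w = φ² g'`, so `φ g` is a
generalized eigenfunction as soon as `w` solves the first-order equation `p w' + q₀ w = φ²`. Its
homogeneous equation is solved by `μ`, and variation of constants yields `w = μ ρ`.
-/

section

variable {𝕜 : Type*} [NontriviallyNormedField 𝕜]

theorem contDiffOn_add_one_of_hasDerivAt {F : Type*} [NormedAddCommGroup F] [NormedSpace 𝕜 F]
    {f f' : 𝕜 → F} {s : Set 𝕜} {k : ℕ∞} (hs : IsOpen s)
    (hf : ∀ z ∈ s, HasDerivAt f (f' z) z) (hf' : ContDiffOn 𝕜 k f' s) :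
    ContDiffOn 𝕜 (k + 1) f s :=
  (contDiffOn_succ_iff_deriv_of_isOpen hs).2
    ⟨fun z hz => (hf z hz).differentiableAt.differentiableWithinAt, by simp,
      hf'.congr fun z hz => (hf z hz).deriv⟩

theorem deriv_deriv_mul {f g : 𝕜 → 𝕜} {z : 𝕜}
    (hf : ContDiffAt 𝕜 2 f z) (hg : ContDiffAt 𝕜 2 g z) :
    deriv (deriv fun x => f x * g x) z =
      f z * deriv (deriv g) z + 2 * deriv f z * deriv g z + deriv (deriv f) z * g z := by
  simpa [iteratedDeriv_eq_iterate, Finset.sum_range_succ] using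
    iteratedDeriv_fun_mul (n := 2) hf hg

/-- The differential operator `T₀ y = p y'' + q y' + r y`, evaluated at `z`. It is built from the total
function `deriv`, so it has this meaning only where `y` is twice differentiable. -/
noncomputable def secondOrderOp (p q r y : 𝕜 → 𝕜) (z : 𝕜) : 𝕜 :=
  p z * deriv (deriv y) z + q z * deriv y z + r z * y z

theorem mul_secondOrderOp_mul (p q r : 𝕜 → 𝕜) {φ g : 𝕜 → 𝕜} {z : 𝕜}
    (hφ : ContDiffAt 𝕜 2 φ z) (hg : ContDiffAt 𝕜 2 g z) :
    φ z * secondOrderOp p q r (fun x => φ x * g x) z =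
      φ z * g z * secondOrderOp p q r φ z +
        (p z * deriv (fun x => φ x ^ 2 * deriv g x) z + q z * (φ z ^ 2 * deriv g z)) := by
  have hφ' : HasDerivAt φ (deriv φ z) z := (hφ.differentiableAt two_ne_zero).hasDerivAt
  have hg' : HasDerivAt g (deriv g z) z := (hg.differentiableAt two_ne_zero).hasDerivAt
  have hg'' : HasDerivAt (deriv g) (deriv (deriv g) z) z :=
    ((hg.derivWithin (m := 1) one_add_one_eq_two.le).differentiableAt one_ne_zero).hasDerivAt
  rw [((hφ'.fun_pow 2).fun_mul hg'').deriv, secondOrderOp, secondOrderOp,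
    deriv_deriv_mul hφ hg, (hφ'.fun_mul hg').deriv]
  push_cast
  ring

theorem mul_deriv_mul_add_of_homogeneous {p q : 𝕜} {μ ρ : 𝕜 → 𝕜} {z : 𝕜}
    (hμ : DifferentiableAt 𝕜 μ z) (hρ : DifferentiableAt 𝕜 ρ z)
    (homogeneous : p * deriv μ z + q * μ z = 0) :
    p * deriv (fun x => μ x * ρ x) z + q * (μ z * ρ z) = p * (μ z * deriv ρ z) := by
  rw [(hμ.hasDerivAt.fun_mul hρ.hasDerivAt).deriv]
  linear_combination ρ z * homogeneous

theorem contDiffOn_of_hasDerivAt_quadratures {p φ μ ρ g : 𝕜 → 𝕜} {s : Set 𝕜} {k : ℕ∞}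
    (hs : IsOpen s) (hp : ContDiffOn 𝕜 k p s) (hp0 : ∀ z ∈ s, p z ≠ 0)
    (hφ : ContDiffOn 𝕜 (k + 1) φ s) (hφ0 : ∀ z ∈ s, φ z ≠ 0)
    (hμ : ContDiffOn 𝕜 (k + 1) μ s) (hμ0 : ∀ z ∈ s, μ z ≠ 0)
    (hρ : ∀ z ∈ s, HasDerivAt ρ (φ z ^ 2 / (p z * μ z)) z)
    (hg : ∀ z ∈ s, HasDerivAt g (μ z * ρ z / φ z ^ 2) z) :
    ContDiffOn 𝕜 (k + 1 + 1) g s := by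
  have hρ_smooth : ContDiffOn 𝕜 (k + 1) ρ s :=
    contDiffOn_add_one_of_hasDerivAt hs hρ <|
      ((hφ.of_le le_self_add).pow 2).div (hp.mul (hμ.of_le le_self_add))
        fun z hz => mul_ne_zero (hp0 z hz) (hμ0 z hz)
  exact_mod_cast contDiffOn_add_one_of_hasDerivAt (k := k + 1) hs hg <|
    (hμ.mul hρ_smooth).div (hφ.pow 2) fun z hz => pow_ne_zero 2 (hφ0 z hz)

theorem statement6_general {q₀ r₀ p φ μ ρ g : 𝕜 → 𝕜} {lam : 𝕜} {s : Set 𝕜} {k : ℕ∞}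
    (hs : IsOpen s) (hp : ContDiffOn 𝕜 k p s) (hp0 : ∀ z ∈ s, p z ≠ 0)
    (hφ : ContDiffOn 𝕜 (k + 1 + 1) φ s) (hφ0 : ∀ z ∈ s, φ z ≠ 0)
    (hμ : ContDiffOn 𝕜 (k + 1) μ s) (hμ0 : ∀ z ∈ s, μ z ≠ 0)
    (heig : ∀ z ∈ s, secondOrderOp p q₀ r₀ φ z = lam * φ z)
    (hμeq : ∀ z ∈ s, deriv μ z / μ z = -q₀ z / p z)
    (hρ : ∀ z ∈ s, HasDerivAt ρ (φ z ^ 2 / (p z * μ z)) z)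
    (hg : ∀ z ∈ s, HasDerivAt g (μ z * ρ z / φ z ^ 2) z) :
    ContDiffOn 𝕜 (k + 1 + 1) (fun x => φ x * g x) s ∧
      ∀ z ∈ s, secondOrderOp p q₀ r₀ (fun x => φ x * g x) z = lam * (φ z * g z) + φ z := by
  have hg_smooth : ContDiffOn 𝕜 (k + 1 + 1) g s :=
    contDiffOn_of_hasDerivAt_quadratures hs hp hp0 (hφ.of_le le_self_add) hφ0 hμ hμ0 hρ hg
  refine ⟨hφ.mul hg_smooth, fun z hz => mul_left_cancel₀ (hφ0 z hz) ?_⟩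
  have contDiffAt_two {f : 𝕜 → 𝕜} (hf : ContDiffOn 𝕜 (k + 1 + 1) f s) : ContDiffAt 𝕜 2 f z :=
    (hf.contDiffAt (hs.mem_nhds hz)).of_le <| by
      rw [add_assoc, one_add_one_eq_two]; exact le_add_self
  have hμz : DifferentiableAt 𝕜 μ z :=
    (hμ.contDiffAt (hs.mem_nhds hz)).differentiableAt (by simp)
  have hw : EqOn (fun x => φ x ^ 2 * deriv g x) (fun x => μ x * ρ x) s := fun x hx => by
    simp only [(hg x hx).deriv, mul_div_cancel₀ _ (pow_ne_zero 2 (hφ0 x hx))]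
  have homogeneous : p z * deriv μ z + q₀ z * μ z = 0 := by
    linear_combination (div_eq_div_iff (hμ0 z hz) (hp0 z hz)).1 (hμeq z hz)
  have w_equation : p z * deriv (fun x => μ x * ρ x) z + q₀ z * (μ z * ρ z) = φ z ^ 2 := by
    rw [mul_deriv_mul_add_of_homogeneous hμz (hρ z hz).differentiableAt homogeneous,
      (hρ z hz).deriv, ← mul_assoc, mul_div_cancel₀ _ (mul_ne_zero (hp0 z hz) (hμ0 z hz))]
  calc φ z * secondOrderOp p q₀ r₀ (fun x => φ x * g x) z
      = φ z * g z * secondOrderOp p q₀ r₀ φ z +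
          (p z * deriv (fun x => μ x * ρ x) z + q₀ z * (μ z * ρ z)) := by
        rw [mul_secondOrderOp_mul p q₀ r₀ (contDiffAt_two hφ) (contDiffAt_two hg_smooth),
          hw.deriv hs hz, show φ z ^ 2 * deriv g z = μ z * ρ z from hw hz]
    _ = φ z * (lam * (φ z * g z) + φ z) := by
        rw [heig z hz, w_equation]
        ring

end

/-- the function `φ⁽¹⁾ = φ·g`, where `g' = μρ/φ²` and `ρ' = φ²/(pμ)`,
is a smooth particular solution of the inhomogeneous equation `(T₀ - λ)y = φ`. -/
theorem statement6 (a b : ℝ) (hab : a < b)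
    (q₀ r₀ p φ μ ρ g : ℝ → ℝ) (lam : ℝ)
    (hq₀ : ContDiffOn ℝ (⊤ : ℕ∞) q₀ (Ioo a b)) (hr₀ : ContDiffOn ℝ (⊤ : ℕ∞) r₀ (Ioo a b))
    (hp : ContDiffOn ℝ (⊤ : ℕ∞) p (Ioo a b)) (hp0 : ∀ z ∈ Ioo a b, p z ≠ 0)
    (hφ : ContDiffOn ℝ (⊤ : ℕ∞) φ (Ioo a b)) (hφ0 : ∀ z ∈ Ioo a b, φ z ≠ 0)
    (hμ : ContDiffOn ℝ (⊤ : ℕ∞) μ (Ioo a b)) (hμ0 : ∀ z ∈ Ioo a b, μ z ≠ 0)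
    (heig : ∀ z ∈ Ioo a b,
      p z * deriv (deriv φ) z + q₀ z * deriv φ z + r₀ z * φ z = lam * φ z)
    (hμeq : ∀ z ∈ Ioo a b, deriv μ z / μ z = -q₀ z / p z)
    (hρ : ∀ z ∈ Ioo a b, HasDerivAt ρ ((φ z) ^ 2 / (p z * μ z)) z)
    (hg : ∀ z ∈ Ioo a b, HasDerivAt g (μ z * ρ z / (φ z) ^ 2) z) :
    ContDiffOn ℝ (⊤ : ℕ∞) (fun x => φ x * g x) (Ioo a b) ∧
    ∀ z ∈ Ioo a b,
      p z * deriv (deriv (fun x => φ x * g x)) z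
        + q₀ z * deriv (fun x => φ x * g x) z
        + r₀ z * (φ z * g z)
      = lam * (φ z * g z) + φ z :=
  statement6_general (k := ⊤) isOpen_Ioo hp hp0 hφ hφ0 hμ hμ0 heig hμeq hρ hg
end

section
/- Let I ⊆ (-1,1) be an open interval, α ∈ ℝ, λ ∈ ℝ, and let τ, π : ℝ → ℝ be polynomials that do not vanish on I. Set τ̂(z) = (1-z²)^{-α-1/2}·τ(z) and λ̂ = λ + 2α + 1, and define for smooth y : I → ℝ the operators T^{(α)}_τ y = (1-z²)·(y'' - 2(τ'/τ)·y' + (τ''/τ)·y) - (2α+1)·z·y' + (2α-1)·z·(τ'/τ)·y, T^{(α+1)}_π y = (1-z²)·(y'' - 2(π'/π)·y' + (π''/π)·y) - (2α+3)·z·y' + (2α+1)·z·(π'/π)·y, A y = τ⁻¹·(π·y' - π'·y), and B y = (1-z²)·π⁻¹·(τ·y' - τ'·y) - (2α+1)·z·(τ/π)·y. If T^{(α+1)}_π τ̂ = λ̂·τ̂ on I, then for every smooth y : I → ℝ one has B(A y) = T^{(α)}_τ y - λ·y and A(B y) = T^{(α+1)}_π y - λ̂·y on I. In particular, the identity π·(T^{(α+1)}_π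 τ̂) = τ̂·(T^{(α)}_τ π) + (2α+1)·π·τ̂ holds on I. -/
open Set Polynomial

/-- The exceptional Gegenbauer operator `T^{(α)}_τ` (with `τ` a polynomial),
acting on smooth functions. -/
noncomputable def xGegenOp (α : ℝ) (τ : Polynomial ℝ) (y : ℝ → ℝ) (z : ℝ) : ℝ :=
  (1 - z ^ 2) * (deriv (deriv y) z
      - 2 * ((derivative τ).eval z / τ.eval z) * deriv y z
      + ((derivative (derivative τ)).eval z / τ.eval z) * y z)
    - (2 * α + 1) * z * deriv y z
    + (2 * α - 1) * z * ((derivative τ).eval z / τ.eval z) * y z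

/-- The first-order operator `A_{τπ} y = τ⁻¹(π y' - π' y)`. -/
noncomputable def aOp (τ π : Polynomial ℝ) (y : ℝ → ℝ) (z : ℝ) : ℝ :=
  (π.eval z * deriv y z - (derivative π).eval z * y z) / τ.eval z

/-- The first-order operator `B^{(α)}_{πτ} y = (1-z²)π⁻¹(τ y' - τ' y) - (2α+1)z(τ/π)y`. -/
noncomputable def bOp (α : ℝ) (τ π : Polynomial ℝ) (y : ℝ → ℝ) (z : ℝ) : ℝ :=
  (1 - z ^ 2) * (τ.eval z * deriv y z - (derivative τ).eval z * y z) / π.eval z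
    - (2 * α + 1) * z * (τ.eval z / π.eval z) * y z

/-- The hatted function `τ̂(z) = (1-z²)^{-α-1/2} τ(z)`. -/
noncomputable def tauHat (α : ℝ) (τ : Polynomial ℝ) (z : ℝ) : ℝ :=
  (1 - z ^ 2) ^ (-α - 1/2 : ℝ) * τ.eval z

/-!
`A y` is the Wronskian of `π` and `y` divided by `τ`, and `B y` is, up to a weight, the Wronskian
of `τ̂` and `y` divided by `π`. Hence `A` annihilates `π` and `B` annihilates `τ̂`. The operator
`BA` has the same coefficients of `y''` and `y'` as `T^{(α)}_τ`, so the two differ by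
multiplication by a function, which evaluation at `π` shows to be `T^{(α)}_τ π / π`; likewise `AB`
and `T^{(α+1)}_π` differ by `T^{(α+1)}_π τ̂ / τ̂`. The intertwining identity says that these two
functions differ by the constant `2α + 1`, so the eigenvalue equation for `τ̂` makes both of them
constant.
-/

/-- The polynomial `(1 - z²) τ' + (2α+1) z τ`: the polynomial factor of the derivative of `τ̂`, and
the coefficient of `-y / π` in `B y`. -/
noncomputable def hatDerivative (α : ℝ) (τ : Polynomial ℝ) : Polynomial ℝ :=
  (1 - X ^ 2) * derivative τ + C (2 * α + 1) * X * τ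

theorem eval_hatDerivative (α : ℝ) (τ : Polynomial ℝ) (z : ℝ) :
    (hatDerivative α τ).eval z
      = (1 - z ^ 2) * (derivative τ).eval z + (2 * α + 1) * z * τ.eval z := by
  simp [hatDerivative]

theorem eval_derivative_hatDerivative (α : ℝ) (τ : Polynomial ℝ) (z : ℝ) :
    (derivative (hatDerivative α τ)).eval z
      = (1 - z ^ 2) * (derivative (derivative τ)).eval z
        + (2 * α - 1) * z * (derivative τ).eval z + (2 * α + 1) * τ.eval z := by
  simp only [hatDerivative, derivative_mul, derivative_sub, derivative_one,
    derivative_X_pow_succ, derivative_C, derivative_X, Nat.cast_one, map_add, map_one, eval_add,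
    eval_sub, eval_mul, eval_pow, eval_one, eval_zero, eval_X, eval_C]
  ring

theorem tauHat_add_one {z : ℝ} (α : ℝ) (τ : Polynomial ℝ) (hz : 1 - z ^ 2 ≠ 0) :
    tauHat (α + 1) τ z = tauHat α τ z / (1 - z ^ 2) := by
  rw [tauHat, tauHat, show -(α + 1) - 1 / 2 = -α - 1 / 2 - 1 by ring, Real.rpow_sub_one hz]
  ring

theorem tauHat_ne_zero {z : ℝ} (α : ℝ) {τ : Polynomial ℝ} (hz : 0 < 1 - z ^ 2)
    (hτ : τ.eval z ≠ 0) : tauHat α τ z ≠ 0 :=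
  mul_ne_zero (Real.rpow_pos_of_pos hz _).ne' hτ

theorem hasDerivAt_tauHat {z : ℝ} (α : ℝ) (τ : Polynomial ℝ) (hz : 1 - z ^ 2 ≠ 0) :
    HasDerivAt (tauHat α τ) (tauHat (α + 1) (hatDerivative α τ) z) z := by
  have hbase : HasDerivAt (fun x : ℝ => 1 - x ^ 2) (-(2 * z)) z := by
    simpa using (hasDerivAt_pow 2 z).const_sub 1
  refine ((hbase.rpow_const (p := -α - 1 / 2) (Or.inl hz)).mul (τ.hasDerivAt z)).congr_deriv ?_
  rw [tauHat_add_one α _ hz, tauHat, eval_hatDerivative, Real.rpow_sub_one hz]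
  field_simp
  ring

theorem deriv_deriv_tauHat {z : ℝ} (α : ℝ) (τ : Polynomial ℝ) (hz : 1 - z ^ 2 ≠ 0) :
    deriv (deriv (tauHat α τ)) z
      = tauHat (α + 1 + 1) (hatDerivative (α + 1) (hatDerivative α τ)) z := by
  have hnear : ∀ᶠ x : ℝ in nhds z, 1 - x ^ 2 ≠ 0 :=
    ContinuousAt.eventually_ne (by fun_prop) hz
  have hderiv : deriv (tauHat α τ) =ᶠ[nhds z] tauHat (α + 1) (hatDerivative α τ) :=
    hnear.mono fun x hx => (hasDerivAt_tauHat α τ hx).deriv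
  rw [hderiv.deriv_eq, (hasDerivAt_tauHat (α + 1) _ hz).deriv]

theorem xGegenOp_eval (α : ℝ) (τ π : Polynomial ℝ) (z : ℝ) :
    xGegenOp α τ (fun x => π.eval x) z
      = (1 - z ^ 2) * ((derivative (derivative π)).eval z
          - 2 * ((derivative τ).eval z / τ.eval z) * (derivative π).eval z
          + ((derivative (derivative τ)).eval z / τ.eval z) * π.eval z)
        - (2 * α + 1) * z * (derivative π).eval z
        + (2 * α - 1) * z * ((derivative τ).eval z / τ.eval z) * π.eval z := by
  have hderiv : deriv (fun x => π.eval x) = fun x => (derivative π).eval x :=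
    funext fun _ => π.deriv
  rw [xGegenOp, hderiv, Polynomial.deriv]

theorem eval_mul_xGegenOp_tauHat {z : ℝ} (α : ℝ) {τ π : Polynomial ℝ} (hz : 1 - z ^ 2 ≠ 0)
    (hτ : τ.eval z ≠ 0) (hπ : π.eval z ≠ 0) :
    π.eval z * xGegenOp (α + 1) π (tauHat α τ) z
      = tauHat α τ z * xGegenOp α τ (fun x => π.eval x) z
        + (2 * α + 1) * π.eval z * tauHat α τ z := by
  rw [xGegenOp_eval, xGegenOp, deriv_deriv_tauHat α τ hz, (hasDerivAt_tauHat α τ hz).deriv,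
    tauHat_add_one _ _ hz, tauHat_add_one _ _ hz, tauHat_add_one _ _ hz]
  simp only [tauHat, eval_hatDerivative, eval_derivative_hatDerivative]
  field_simp
  ring

/-- The first-order operator `y ↦ (p y' - q y) / r` with polynomial coefficients, the common form
of `A` and `B`. -/
noncomputable def firstOrderOp (p q r : Polynomial ℝ) (y : ℝ → ℝ) (z : ℝ) : ℝ :=
  (p.eval z * deriv y z - q.eval z * y z) / r.eval z

theorem deriv_firstOrderOp {z : ℝ} (p q : Polynomial ℝ) {r : Polynomial ℝ} {y : ℝ → ℝ}
    (hr : r.eval z ≠ 0) (hy : ContDiffAt ℝ 2 y z) :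
    deriv (firstOrderOp p q r y) z
      = (p.eval z * deriv (deriv y) z + ((derivative p).eval z - q.eval z) * deriv y z
          - (derivative q).eval z * y z
          - (derivative r).eval z * firstOrderOp p q r y z) / r.eval z := by
  have hy₁ : HasDerivAt y (deriv y z) z := (hy.differentiableAt two_ne_zero).hasDerivAt
  have hy₂ : HasDerivAt (deriv y) (deriv (deriv y) z) z :=
    ((hy.derivWithin one_add_one_eq_two.le).differentiableAt one_ne_zero).hasDerivAt
  refine ((((p.hasDerivAt z).mul hy₂).sub ((q.hasDerivAt z).mul hy₁)).div
    (r.hasDerivAt z) hr).deriv.trans ?_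
  simp only [firstOrderOp, Pi.sub_apply, Pi.mul_apply]
  field_simp
  ring

theorem aOp_eq_firstOrderOp (τ π : Polynomial ℝ) : aOp τ π = firstOrderOp π (derivative π) τ :=
  rfl

theorem bOp_eq_firstOrderOp (α : ℝ) (τ π : Polynomial ℝ) :
    bOp α τ π = firstOrderOp ((1 - X ^ 2) * τ) (hatDerivative α τ) π := by
  ext y z
  simp only [bOp, firstOrderOp, eval_hatDerivative, eval_mul, eval_sub, eval_one, eval_pow, eval_X]
  ring

theorem bOp_aOp {z : ℝ} (α : ℝ) {τ π : Polynomial ℝ} {y : ℝ → ℝ} (hτ : τ.eval z ≠ 0)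
    (hπ : π.eval z ≠ 0) (hy : ContDiffAt ℝ 2 y z) :
    bOp α τ π (aOp τ π y) z
      = xGegenOp α τ y z - xGegenOp α τ (fun x => π.eval x) z / π.eval z * y z := by
  rw [bOp, aOp_eq_firstOrderOp, deriv_firstOrderOp _ _ hτ hy, xGegenOp_eval, xGegenOp,
    firstOrderOp]
  field_simp
  ring

theorem aOp_bOp {z : ℝ} (α : ℝ) {τ π : Polynomial ℝ} {y : ℝ → ℝ} (hτ : τ.eval z ≠ 0)
    (hπ : π.eval z ≠ 0) (hy : ContDiffAt ℝ 2 y z) :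
    aOp τ π (bOp α τ π y) z
      = xGegenOp (α + 1) π y z
        - (xGegenOp α τ (fun x => π.eval x) z / π.eval z + (2 * α + 1)) * y z := by
  rw [aOp, bOp_eq_firstOrderOp, deriv_firstOrderOp _ _ hπ hy, xGegenOp_eval, xGegenOp,
    firstOrderOp, eval_derivative_hatDerivative, eval_hatDerivative]
  simp only [eval_mul, eval_sub, eval_one, eval_pow, eval_X, derivative_mul, derivative_sub,
    derivative_one, derivative_X_pow_succ, Nat.cast_one, map_add, map_one, pow_one, zero_sub,
    neg_mul, eval_add, eval_neg]
  field_simp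
  ring

theorem statement9_general {α lam z : ℝ} {τ π : Polynomial ℝ} (hz : z ∈ Ioo (-1) 1)
    (hτ : τ.eval z ≠ 0) (hπ : π.eval z ≠ 0) :
    (xGegenOp (α + 1) π (tauHat α τ) z = (lam + 2 * α + 1) * tauHat α τ z →
      ∀ y : ℝ → ℝ, ContDiffAt ℝ 2 y z →
        bOp α τ π (aOp τ π y) z = xGegenOp α τ y z - lam * y z ∧
        aOp τ π (bOp α τ π y) z
          = xGegenOp (α + 1) π y z - (lam + 2 * α + 1) * y z) ∧
    π.eval z * xGegenOp (α + 1) π (tauHat α τ) z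
      = tauHat α τ z * xGegenOp α τ (fun x => π.eval x) z
        + (2 * α + 1) * π.eval z * tauHat α τ z := by
  have hpos : 0 < 1 - z ^ 2 := by nlinarith [hz.1, hz.2]
  have hid := eval_mul_xGegenOp_tauHat α hpos.ne' hτ hπ
  refine ⟨fun heig y hy => ?_, hid⟩
  have hdual : xGegenOp α τ (fun x => π.eval x) z / π.eval z = lam := by
    rw [div_eq_iff hπ]
    refine mul_left_cancel₀ (tauHat_ne_zero α hpos hτ) ?_
    linear_combination π.eval z * heig - hid
  rw [bOp_aOp α hτ hπ hy, aOp_bOp α hτ hπ hy, hdual, add_assoc]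
  exact ⟨rfl, rfl⟩

/-- the dual (state-adding) factorization. If
`T^{(α+1)}_π τ̂ = λ̂ τ̂` on `I`, with `λ̂ = λ + 2α + 1`, then `BA = T^{(α)}_τ - λ`
and `AB = T^{(α+1)}_π - λ̂` on `I`; in particular
`π (T^{(α+1)}_π τ̂) = τ̂ (T^{(α)}_τ π) + (2α+1) π τ̂` on `I`. -/
theorem statement9 (a b : ℝ) (hab : a < b) (ha : -1 ≤ a) (hb : b ≤ 1)
    (α lam : ℝ) (τ π : Polynomial ℝ)
    (hτ0 : ∀ z ∈ Ioo a b, τ.eval z ≠ 0) (hπ0 : ∀ z ∈ Ioo a b, π.eval z ≠ 0)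
    (heig : ∀ z ∈ Ioo a b,
      xGegenOp (α + 1) π (tauHat α τ) z = (lam + 2 * α + 1) * tauHat α τ z) :
    (∀ y : ℝ → ℝ, ContDiffOn ℝ (⊤ : ℕ∞) y (Ioo a b) → ∀ z ∈ Ioo a b,
      bOp α τ π (aOp τ π y) z = xGegenOp α τ y z - lam * y z ∧
      aOp τ π (bOp α τ π y) z
        = xGegenOp (α + 1) π y z - (lam + 2 * α + 1) * y z) ∧
    (∀ z ∈ Ioo a b,
      π.eval z * xGegenOp (α + 1) π (tauHat α τ) z
        = tauHat α τ z * xGegenOp α τ (fun x => π.eval x) z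
          + (2 * α + 1) * π.eval z * tauHat α τ z) := by
  have hgen (z : ℝ) (hz : z ∈ Ioo a b) := statement9_general (α := α) (lam := lam)
    (Ioo_subset_Ioo ha hb hz) (hτ0 z hz) (hπ0 z hz)
  exact ⟨fun y hy z hz => (hgen z hz).1 (heig z hz) y
    ((hy.contDiffAt (isOpen_Ioo.mem_nhds hz)).of_le (WithTop.coe_le_coe.2 le_top)),
    fun z hz => (hgen z hz).2⟩
end
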